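/- Let H be a real Hilbert space and let T and T_n (n ∈ ℕ) be compact self-adjoint continuous linear operators on H. Assume the family (T_n) is collectively compact and that T_n f → T f in H for every f ∈ H. Let μ ≠ 0 be an eigenvalue of T, let E := ker(μ·I − T) be its eigenspace, which is finite-dimensional of dimension m, and let φ_1, …, φ_m be an orthonormal basis of E. Then there exist constants C > 0, r > 0 and N ∈ ℕ such that for every n ≥ N and every eigenvalue ν of T_n with |ν − μ| < r, one has |μ − ν| ≤ C ( Σ_{i,j=1}^m |⟨(T − T_n)φ_i, φ_j⟩_H| + ‖(T − T_n) ∘ ι_E‖² ), where ι_E : E → H is the inclusion of the eigenspace and ‖·‖ denotes the operator norm. -/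

import Mathlib

open scoped InnerProductSpace
open Filter Topology


theorem aux_lower
    {H : Type*} [NormedAddCommGroup H] [InnerProductSpace ℝ H] [CompleteSpace H]
    (T : H →L[ℝ] H) (Tn : ℕ → H →L[ℝ] H)
    (hTsa : ∀ x y : H, ⟪T x, y⟫_ℝ = ⟪x, T y⟫_ℝ)
    (hcc : ∀ B : Set H, Bornology.IsBounded B →
      IsCompact (closure (⋃ n : ℕ, (Tn n) '' B)))
    (hpc : ∀ f : H, Tendsto (fun n => Tn n f) atTop (nhds (T f)))
    (μ : ℝ) (hμ : μ ≠ 0)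
    (E : Submodule ℝ H) [FiniteDimensional ℝ E]
    (hE : ∀ x, x ∈ E ↔ T x = μ • x) :
    ∃ c > (0 : ℝ), ∃ r > (0 : ℝ), ∃ N : ℕ, ∀ n ≥ N, ∀ ν : ℝ, |ν - μ| < r →
      ∀ w ∈ Eᗮ, c * ‖w‖ ≤ ‖Eᗮ.starProjection (Tn n w - ν • w)‖ := by
  by_contra hcon
  push Not at hcon
  have hstep : ∀ k : ℕ, ∃ n : ℕ, ∃ ν : ℝ, ∃ u : H, n ≥ k ∧ |ν - μ| < 1 / ((k:ℝ) + 1) ∧ u ∈ Eᗮ ∧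
      ‖u‖ = 1 ∧ ‖Eᗮ.starProjection (Tn n u - ν • u)‖ < 1 / ((k:ℝ) + 1) := by
    intro k
    have hk : (0:ℝ) < 1 / ((k:ℝ) + 1) := by positivity
    obtain ⟨n, hn, ν, hν, w, hw, hlt⟩ := hcon _ hk _ hk k
    have hw0 : 0 < ‖w‖ := by
      rw [norm_pos_iff]
      rintro rfl
      simp at hlt
    refine ⟨n, ν, ‖w‖⁻¹ • w, hn, hν, Eᗮ.smul_mem _ hw, ?_, ?_⟩
    · rw [norm_smul, norm_inv, norm_norm, inv_mul_cancel₀ hw0.ne']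
    · have : Tn n (‖w‖⁻¹ • w) - ν • (‖w‖⁻¹ • w) = ‖w‖⁻¹ • (Tn n w - ν • w) := by
        rw [map_smul, smul_sub, smul_comm]
      rw [this, map_smul, norm_smul, norm_inv, norm_norm, inv_mul_lt_iff₀ hw0, mul_comm]
      exact hlt
  choose n ν u hn hν hu hu1 hlt using hstep
  have hK := hcc (Metric.closedBall 0 1) Metric.isBounded_closedBall
  have hmem : ∀ k, Tn (n k) (u k) ∈ closure (⋃ n : ℕ, (Tn n) '' Metric.closedBall 0 1) := by
    intro k
    apply subset_closure
    refine Set.mem_iUnion.2 ⟨n k, u k, ?_, rfl⟩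
    simp [hu1]
  obtain ⟨y, -, g, hg, hy⟩ := hK.tendsto_subseq hmem
  have h1 : Tendsto (fun k : ℕ => 1 / ((k:ℝ) + 1)) atTop (𝓝 0) :=
    tendsto_one_div_add_atTop_nhds_zero_nat
  have hνlim : Tendsto ν atTop (𝓝 μ) := by
    rw [tendsto_iff_norm_sub_tendsto_zero]
    exact squeeze_zero (fun _ => norm_nonneg _) (fun k => (hν k).le) h1
  have hνg := hνlim.comp hg.tendsto_atTop
  have hQ0 : Tendsto (fun k => Eᗮ.starProjection (Tn (n k) (u k) - ν k • u k)) atTop (𝓝 0) :=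
    squeeze_zero_norm (fun k => (hlt k).le) h1
  have hQg := hQ0.comp hg.tendsto_atTop
  have hQy : Tendsto (fun k => Eᗮ.starProjection (Tn (n (g k)) (u (g k)))) atTop
      (𝓝 (Eᗮ.starProjection y)) := (Eᗮ.starProjection.continuous.tendsto y).comp hy
  have hνu : Tendsto (fun k => ν (g k) • u (g k)) atTop (𝓝 (Eᗮ.starProjection y)) := by
    have := hQy.sub hQg
    rw [sub_zero] at this
    refine this.congr fun k => ?_
    simp only [Function.comp, map_sub, map_smul,
      Submodule.starProjection_eq_self_iff.2 (hu (g k))]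
    abel
  set w := μ⁻¹ • Eᗮ.starProjection y with hw
  have hulim : Tendsto (fun k => u (g k)) atTop (𝓝 w) := by
    have := (hνg.inv₀ hμ).smul hνu
    refine this.congr' ?_
    filter_upwards [hνg.eventually_ne hμ] with k hk
    simp only [Function.comp] at hk ⊢
    rw [smul_smul, inv_mul_cancel₀ hk, one_smul]
  have hw1 : ‖w‖ = 1 := by
    have := hulim.norm
    simp only [hu1] at this
    exact (tendsto_nhds_unique this tendsto_const_nhds)
  have hwE : w ∈ Eᗮ := Eᗮ.smul_mem _ (Submodule.starProjection_apply_mem _ _)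
  obtain ⟨M, hM⟩ := banach_steinhaus (g := Tn) (fun x => by
    obtain ⟨C, hC⟩ := (hpc x).norm.bddAbove_range
    exact ⟨C, fun i => hC ⟨i, rfl⟩⟩)
  have hng : Tendsto (fun k => n (g k)) atTop atTop :=
    (tendsto_atTop_mono hn tendsto_id).comp hg.tendsto_atTop
  have hyT : y = T w := by
    refine tendsto_nhds_unique hy ?_
    have hd : Tendsto (fun k => Tn (n (g k)) (u (g k) - w)) atTop (𝓝 0) := by
      refine squeeze_zero_norm (a := fun k => M * ‖u (g k) - w‖) (fun k => ?_) ?_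
      · exact (Tn (n (g k))).le_of_opNorm_le (hM _) _
      · simpa using (tendsto_iff_norm_sub_tendsto_zero.1 hulim).const_mul M
    have := hd.add ((hpc w).comp hng)
    rw [zero_add] at this
    refine this.congr fun k => ?_
    simp [Function.comp]
  have hTw : T w ∈ Eᗮ := by
    rw [Submodule.mem_orthogonal]
    intro v hv
    rw [← hTsa, (hE v).1 hv, inner_smul_left, (Submodule.mem_orthogonal _ _).1 hwE v hv, mul_zero]
  have hwmem : w ∈ E := by
    rw [hE]
    rw [hyT, Submodule.starProjection_eq_self_iff.2 hTw] at hw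
    conv_rhs => rw [hw]
    rw [smul_smul, mul_inv_cancel₀ hμ, one_smul]
  have : w = 0 := by
    have := (Submodule.mem_orthogonal _ _).1 hwE w hwmem
    simpa using this
  rw [this] at hw1
  simp at hw1

theorem aux_form
    {H : Type*} [NormedAddCommGroup H] [InnerProductSpace ℝ H]
    (A : H →L[ℝ] H) (E : Submodule ℝ H) (m : ℕ)
    (φ : Fin m → H) (hφon : Orthonormal ℝ φ)
    (hφspan : Submodule.span ℝ (Set.range φ) = E) (e : H) (he : e ∈ E) :
    |⟪A e, e⟫_ℝ| ≤ (∑ a : Fin m, ∑ b : Fin m, |⟪A (φ a), φ b⟫_ℝ|) * ‖e‖ ^ 2 := by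
  rw [← hφspan, Submodule.mem_span_range_iff_exists_fun] at he
  obtain ⟨c, hc⟩ := he
  have hci : ∀ i, |c i| ≤ ‖e‖ := by
    intro i
    have : ⟪φ i, e⟫_ℝ = c i := by
      rw [← hc]; exact hφon.inner_right_fintype c i
    rw [← this]
    have := abs_real_inner_le_norm (φ i) e
    rwa [hφon.1 i, one_mul] at this
  have hexp : ⟪A e, e⟫_ℝ = ∑ a, ∑ b, c a * c b * ⟪A (φ a), φ b⟫_ℝ := by
    rw [← hc, map_sum, sum_inner]
    refine Finset.sum_congr rfl fun a _ => ?_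
    rw [inner_sum]
    refine Finset.sum_congr rfl fun b _ => ?_
    rw [map_smul, real_inner_smul_left, real_inner_smul_right, mul_assoc]
  rw [hexp, Finset.sum_mul]
  refine (Finset.abs_sum_le_sum_abs _ _).trans (Finset.sum_le_sum fun a _ => ?_)
  rw [Finset.sum_mul]
  refine (Finset.abs_sum_le_sum_abs _ _).trans (Finset.sum_le_sum fun b _ => ?_)
  rw [abs_mul, abs_mul, mul_comm, sq]
  have := mul_le_mul (hci a) (hci b) (abs_nonneg _) (norm_nonneg _)
  exact mul_le_mul_of_nonneg_left this (abs_nonneg _)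

/-- Let `H` be a real Hilbert space and `T`, `Tn n` (`n ∈ ℕ`) compact
self-adjoint continuous linear operators on `H`.  Assume the family `(Tn)` is
collectively compact and `Tn n f → T f` for every `f ∈ H`.  Let `μ ≠ 0` be an eigenvalue
of `T`, `E := ker(μ·I − T)` its eigenspace, finite-dimensional of dimension `m`, and
`φ_1, …, φ_m` an orthonormal basis of `E`.  Then there exist `C > 0`, `r > 0` and `N`
such that for every `n ≥ N` and every eigenvalue `ν` of `Tn n` with `|ν − μ| < r`,
`|μ − ν| ≤ C (Σ_{i,j} |⟪(T − Tn n) φ_i, φ_j⟫| + ‖(T − Tn n) ∘ ι_E‖²)`. -/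
theorem stmt_12
    {H : Type*} [NormedAddCommGroup H] [InnerProductSpace ℝ H] [CompleteSpace H]
    (T : H →L[ℝ] H) (Tn : ℕ → H →L[ℝ] H)
    (hTcompact : IsCompactOperator (⇑T))
    (hTncompact : ∀ n, IsCompactOperator (⇑(Tn n)))
    (hTsa : ∀ x y : H, ⟪T x, y⟫_ℝ = ⟪x, T y⟫_ℝ)
    (hTnsa : ∀ n, ∀ x y : H, ⟪Tn n x, y⟫_ℝ = ⟪x, Tn n y⟫_ℝ)
    (hcc : ∀ B : Set H, Bornology.IsBounded B →
      IsCompact (closure (⋃ n : ℕ, (Tn n) '' B)))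
    (hpc : ∀ f : H, Tendsto (fun n => Tn n f) atTop (nhds (T f)))
    (μ : ℝ) (hμ : μ ≠ 0) (hμeig : ∃ x : H, x ≠ 0 ∧ T x = μ • x)
    (E : Submodule ℝ H)
    (hE : E = LinearMap.ker (μ • ContinuousLinearMap.id ℝ H - T).toLinearMap)
    (m : ℕ) (hm : Module.finrank ℝ E = m)
    (φ : Fin m → H) (hφE : ∀ j, φ j ∈ E) (hφon : Orthonormal ℝ φ)
    (hφspan : Submodule.span ℝ (Set.range φ) = E) :
    ∃ C > (0 : ℝ), ∃ r > (0 : ℝ), ∃ N : ℕ, ∀ n ≥ N, ∀ ν : ℝ,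
      (∃ x : H, x ≠ 0 ∧ Tn n x = ν • x) → |ν - μ| < r →
      |μ - ν| ≤ C * ((∑ a : Fin m, ∑ b : Fin m, |⟪(T - Tn n) (φ a), φ b⟫_ℝ|) +
        ‖(T - Tn n).comp E.subtypeL‖ ^ 2) := by
  have hfd : FiniteDimensional ℝ E := by
    rw [← hφspan]
    exact FiniteDimensional.span_of_finite ℝ (Set.finite_range φ)
  have hE' : ∀ x, x ∈ E ↔ T x = μ • x := by
    intro x
    rw [hE]
    simp only [LinearMap.mem_ker, ContinuousLinearMap.coe_coe, ContinuousLinearMap.sub_apply,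
      ContinuousLinearMap.smul_apply, ContinuousLinearMap.id_apply, sub_eq_zero]
    exact eq_comm
  obtain ⟨c, hc, r, hr, N, hN⟩ := aux_lower T Tn hTsa hcc hpc μ hμ E hE'
  refine ⟨1 + c⁻¹, by positivity, r, hr, N, ?_⟩
  rintro n hn ν ⟨x, hx0, hx⟩ hν
  set S := ∑ a : Fin m, ∑ b : Fin m, |⟪(T - Tn n) (φ a), φ b⟫_ℝ| with hS
  set δ := ‖(T - Tn n).comp E.subtypeL‖ with hδ
  have hS0 : 0 ≤ S := Finset.sum_nonneg fun a _ => Finset.sum_nonneg fun b _ => abs_nonneg _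
  have hδ0 : 0 ≤ δ := ContinuousLinearMap.opNorm_nonneg _
  obtain ⟨e, he, w, hw, hxe⟩ := Submodule.exists_add_mem_mem_orthogonal (K := E) x
  have hTe := (hE' e).1 he
  have hδe : ‖(T - Tn n) e‖ ≤ δ * ‖e‖ :=
    ((T - Tn n).comp E.subtypeL).le_opNorm ⟨e, he⟩
  have heq : Tn n w - ν • w = (T - Tn n) e - (μ - ν) • e := by
    rw [hxe, map_add] at hx
    rw [ContinuousLinearMap.sub_apply, hTe, eq_sub_of_add_eq' hx]
    module
  have hQ : Eᗮ.starProjection (Tn n w - ν • w) = Eᗮ.starProjection ((T - Tn n) e) := by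
    have : Eᗮ.starProjection e = 0 := by
      rw [Submodule.starProjection_apply_eq_zero_iff]
      exact Submodule.le_orthogonal_orthogonal E he
    rw [heq, map_sub, map_smul, this, smul_zero, sub_zero]
  have hwb : c * ‖w‖ ≤ δ * ‖e‖ := by
    refine (hN n hn ν hν w hw).trans ?_
    rw [hQ]
    exact (Submodule.norm_starProjection_apply_le _ _).trans hδe
  have he0 : 0 < ‖e‖ := by
    rw [norm_pos_iff]
    rintro rfl
    rw [norm_zero, mul_zero] at hwb
    have : ‖w‖ ≤ 0 := by
      by_contra h
      push Not at h
      have := mul_pos hc h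
      linarith
    have hw0 : w = 0 := norm_le_zero_iff.1 this
    apply hx0
    rw [hxe, hw0, add_zero]
  have hwe : ⟪w, e⟫_ℝ = 0 := by
    rw [real_inner_comm]; exact (Submodule.mem_orthogonal _ _).1 hw e he
  have hkey : (μ - ν) * ‖e‖ ^ 2 = ⟪(T - Tn n) e, e⟫_ℝ + ⟪(T - Tn n) e, w⟫_ℝ := by
    have h1 : ⟪Tn n w - ν • w, e⟫_ℝ = ⟪(T - Tn n) e, e⟫_ℝ - (μ - ν) * ‖e‖ ^ 2 := by
      rw [heq, inner_sub_left, real_inner_smul_left, real_inner_self_eq_norm_sq]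
    have h2 : ⟪Tn n w - ν • w, e⟫_ℝ = - ⟪(T - Tn n) e, w⟫_ℝ := by
      rw [inner_sub_left, real_inner_smul_left, hwe, hTnsa, ContinuousLinearMap.sub_apply,
        inner_sub_left, hTe, real_inner_smul_left, real_inner_comm w e, hwe,
        real_inner_comm w (Tn n e)]
      ring
    linarith
  have hform := aux_form (T - Tn n) E m φ hφon hφspan e he
  have hcross : |⟪(T - Tn n) e, w⟫_ℝ| ≤ c⁻¹ * δ ^ 2 * ‖e‖ ^ 2 := by
    have hw' : ‖w‖ ≤ c⁻¹ * (δ * ‖e‖) := by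
      rw [← div_eq_inv_mul, le_div_iff₀ hc]; linarith
    calc _ ≤ ‖(T - Tn n) e‖ * ‖w‖ := abs_real_inner_le_norm _ _
      _ ≤ (δ * ‖e‖) * (c⁻¹ * (δ * ‖e‖)) := by gcongr
      _ = _ := by ring
  have hfin : |μ - ν| * ‖e‖ ^ 2 ≤ (S + c⁻¹ * δ ^ 2) * ‖e‖ ^ 2 := by
    have h3 : |μ - ν| * ‖e‖ ^ 2 = |(μ - ν) * ‖e‖ ^ 2| := by
      rw [abs_mul, abs_of_nonneg (sq_nonneg ‖e‖)]
    rw [h3, hkey, add_mul]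
    exact (abs_add_le _ _).trans (add_le_add hform hcross)
  have h4 := le_of_mul_le_mul_right hfin (by positivity)
  have h5 : 0 ≤ c⁻¹ * S := by positivity
  have h6 : 0 ≤ δ ^ 2 := by positivity
  nlinarith
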